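/- Let G be a group such that for every natural number n, the diagonal action of the automorphism group Aut(G) on n-tuples of elements of G (i.e., on functions Fin n → G, acting coordinatewise) has only finitely many orbits. Then G is locally finite: every finitely generated subgroup of G is finite. -/

import Mathlib

/-!
An element `a` fixed by every automorphism that fixes the tuple `x` is determined by the orbit of
the tuple `(a, x)`: if `φ` maps `(a, x)` to `(b, x)`, then `φ` fixes `x`, hence `a`, and so
`b = φ a = a`. All elements generated by `x` are of this kind, so there are at most as many of
them as there are orbits on tuples with one more entry than `x`.
-/

open MulAction

section Action

variable {G α β : Type*} [Group G] [MulAction G α] [MulAction G β]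

theorem injOn_fixedPoints_stabilizer_orbit_mk (b : β) :
    Set.InjOn (fun a : α ↦ (Quotient.mk _ (a, b) : orbitRel.Quotient G (α × β)))
      (fixedPoints (stabilizer G b) α) := by
  intro a _ a' ha' h
  obtain ⟨g, hg⟩ : (a, b) ∈ orbit G (a', b) := orbitRel_apply.1 (Quotient.exact h)
  have hga : g • a' = a := congrArg Prod.fst hg
  have hgb : g • b = b := congrArg Prod.snd hg
  have hga' : g • a' = a' := ha' ⟨g, hgb⟩
  exact hga.symm.trans hga'

theorem finite_fixedPoints_stabilizer [Finite (orbitRel.Quotient G (α × β))] (b : β) :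
    (fixedPoints (stabilizer G b) α).Finite :=
  Set.Finite.of_injOn (Set.mapsTo_univ _ _) (injOn_fixedPoints_stabilizer_orbit_mk b)
    Set.finite_univ

theorem finite_orbitRel_quotient_of_surjective [Finite (orbitRel.Quotient G α)] (f : α →[G] β)
    (hf : Function.Surjective f) : Finite (orbitRel.Quotient G β) := by
  have hrel : ∀ a a', orbitRel G α a a' → orbitRel G β (f a) (f a') := by
    rintro _ a' ⟨g, rfl⟩
    exact ⟨g, (map_smul f g a').symm⟩
  exact Finite.of_surjective (Quotient.map f hrel) (Quotient.map_surjective hrel hf)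

theorem finite_orbitRel_quotient_prod_fin {n : ℕ}
    [Finite (orbitRel.Quotient G (Fin (n + 1) → α))] :
    Finite (orbitRel.Quotient G (α × (Fin n → α))) :=
  finite_orbitRel_quotient_of_surjective
    { toFun := fun x : Fin (n + 1) → α ↦ (x 0, Fin.tail x), map_smul' := fun _ _ ↦ rfl }
    fun ⟨a, x⟩ ↦ ⟨Fin.cons a x, rfl⟩

end Action

section DistribAction

variable {A M : Type*} [Group A] [Monoid M] [MulDistribMulAction A M]

theorem closure_range_le_fixedPoints_stabilizer {ι : Type*} (x : ι → M) :
    Submonoid.closure (Set.range x) ≤ FixedPoints.submonoid (stabilizer A x) M := by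
  rw [Submonoid.closure_le]
  rintro _ ⟨i, rfl⟩ ⟨φ, hφ⟩
  exact congrFun hφ i

variable (A) in
theorem stmt1_general {n : ℕ} [Finite (orbitRel.Quotient A (Fin (n + 1) → M))]
    (x : Fin n → M) : Finite (Submonoid.closure (Set.range x)) :=
  have := finite_orbitRel_quotient_prod_fin (G := A) (α := M) (n := n)
  (finite_fixedPoints_stabilizer x).subset (closure_range_le_fixedPoints_stabilizer (A := A) x)

end DistribAction

/-- If the automorphism group of a group `G` acts with finitely many orbits on `n`-tuples
of elements of `G` for every `n`, then `G` is locally finite: every finitely generated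
subgroup of `G` is finite. -/
theorem stmt1 {G : Type*} [Group G]
    (hG : ∀ n : ℕ, Finite (MulAction.orbitRel.Quotient (MulAut G) (Fin n → G)))
    (S : Subgroup G) (hS : S.FG) : Finite S := by
  obtain ⟨T, hTS, hT⟩ := (Submonoid.fg_iff _).1 (S.fg_iff_submonoid_fg.1 hS)
  obtain ⟨n, x, -, rfl⟩ := hT.fin_param
  have hfin : Finite S.toSubmonoid := hTS ▸ stmt1_general (MulAut G) x
  exact hfin
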